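/- arXiv:2105.07056 — 2 statements merged into one kernel-verified Lean document; each statement's English description precedes it below -/
import Mathlib

section
/- For every even integer N ≥ 2 and every discrete function φ, the discrete inner product satisfies (φ, H_h(S_h³ φ))_h = −2π Σ_{k=−N/2+1}^{N/2−1} |k|³ |φ̂_k|². In particular, for every real μ > 0 the quadratic form φ ↦ Re (φ, μ H_h(S_h³ φ))_h is nonpositive. -/
open scoped BigOperators
open Finset

noncomputable section

/-- Grid spacing `h = 2π/N`. -/
def hgrid (N : ℤ) : ℝ := 2 * Real.pi / N

/-- Grid points `α_j = j h`. -/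
def gridPt (N : ℤ) (j : ℤ) : ℝ := j * hgrid N

/-- Index set `{-N/2+1, …, N/2}`. -/
def idxs (N : ℤ) : Finset ℤ := Finset.Icc (-(N / 2) + 1) (N / 2)

/-- Discrete Fourier coefficient `f̂_k`. -/
def dft (N : ℤ) (f : ℤ → ℂ) (k : ℤ) : ℂ :=
  (N : ℂ)⁻¹ * ∑ j ∈ idxs N, f j * Complex.exp (-(Complex.I * (k : ℂ) * (gridPt N j : ℂ)))

/-- Reconstruction of a discrete function from Fourier coefficients. -/
def idft (N : ℤ) (c : ℤ → ℂ) (j : ℤ) : ℂ :=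
  ∑ k ∈ idxs N, c k * Complex.exp (Complex.I * (k : ℂ) * (gridPt N j : ℂ))

/-- The pseudo-spectral derivative `S_h`. -/
def Sh (N : ℤ) (f : ℤ → ℂ) : ℤ → ℂ :=
  idft N fun k => if k = N / 2 then 0 else Complex.I * (k : ℂ) * dft N f k

/-- The pseudo-spectral antiderivative `S_h⁻¹`. -/
def Shinv (N : ℤ) (f : ℤ → ℂ) : ℤ → ℂ :=
  idft N fun k => if k = 0 then 0 else dft N f k / (Complex.I * (k : ℂ))

/-- The filtered discrete function `f^p`. -/
def filterP (N : ℤ) (ρ : ℝ → ℝ) (f : ℤ → ℂ) : ℤ → ℂ :=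
  idft N fun k => (ρ (gridPt N k) : ℂ) * dft N f k

/-- The filtered derivative `D_h`. -/
def Dh (N : ℤ) (ρ : ℝ → ℝ) (f : ℤ → ℂ) : ℤ → ℂ :=
  idft N fun k => Complex.I * (k : ℂ) * (ρ (gridPt N k) : ℂ) * dft N f k

/-- Discrete `l²` norm. -/
def l2norm (N : ℤ) (f : ℤ → ℂ) : ℝ :=
  Real.sqrt (hgrid N * ∑ j ∈ idxs N, ‖f j‖ ^ 2)

/-- Discrete Hilbert transform `H_h`. -/
def Hh (N : ℤ) (f : ℤ → ℂ) (i : ℤ) : ℂ :=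
  ((hgrid N / Real.pi : ℝ) : ℂ) *
    ∑ j ∈ (idxs N).filter (fun j => Odd (j - i)),
      f j * (Real.cot ((gridPt N i - gridPt N j) / 2) : ℂ)

/-- Discrete inner product `(f,g)_h`. -/
def dip (N : ℤ) (f g : ℤ → ℂ) : ℂ :=
  (hgrid N : ℂ) * ∑ j ∈ idxs N, (starRingEnd ℂ) (f j) * g j

/-- Discrete mean `⟨f⟩_h`. -/
def dmean (N : ℤ) (f : ℤ → ℂ) : ℂ :=
  (N : ℂ)⁻¹ * ∑ j ∈ idxs N, f j

/-- The discrete function of samples of a periodic function. -/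
def samples (N : ℤ) (f : ℝ → ℂ) : ℤ → ℂ := fun j => f (gridPt N j)

/-- Fourier coefficient of a `2π`-periodic function. -/
def fourierCoeffP (f : ℝ → ℂ) (k : ℤ) : ℂ :=
  ((2 * Real.pi)⁻¹ : ℝ) * ∫ α in (-Real.pi)..Real.pi, f α * Complex.exp (-(Complex.I * (k : ℂ) * (α : ℂ)))

/-- Sobolev norm `‖f‖_s`. -/
def sobolevNorm (s : ℕ) (f : ℝ → ℂ) : ℝ :=
  Real.sqrt (∑' k : ℤ, (1 + (k : ℝ) ^ 2) ^ s * ‖fourierCoeffP f k‖ ^ 2)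

/-- A filter (cutoff) function for numerical filtering. -/
structure IsFilter (ρ : ℝ → ℝ) : Prop where
  even : ∀ x, ρ (-x) = ρ x
  nonneg : ∀ x, 0 ≤ ρ x
  smooth : ∃ r : ℕ, 2 < r ∧ ContDiff ℝ r ρ
  zero_at_pi : ρ Real.pi = 0
  zero_at_neg_pi : ρ (-Real.pi) = 0
  deriv_zero_at_pi : deriv ρ Real.pi = 0
  deriv_zero_at_neg_pi : deriv ρ (-Real.pi) = 0
  one_near_zero : ∃ μ : ℝ, 0 < μ ∧ μ < 1 ∧ ∀ x : ℝ, |x| ≤ μ * Real.pi → ρ x = 1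

/-- The grid exponential `e^{ih}`. -/
def gridRoot (N : ℤ) : ℂ := Complex.exp (Complex.I * (hgrid N : ℂ))

/-- The cotangent `cot(x/2)` as a rational function of `w = e^{ix}`. -/
def cotKernel (w : ℂ) : ℂ := (w + 1) / (Complex.I * (1 - w))

lemma sum_Ico_periodic_add_one {N : ℤ} (hN : 0 < N) {F : ℤ → ℂ} (hF : Function.Periodic F N)
    (a : ℤ) : ∑ j ∈ Ico (a + 1) (a + 1 + N), F j = ∑ j ∈ Ico a (a + N), F j := by
  rw [show a + 1 + N = a + N + 1 by ring,
    ← Finset.insert_Ico_right_eq_Ico_add_one (show a + 1 ≤ a + N by lia),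
    ← Finset.insert_Ico_add_one_left_eq_Ico (show a < a + N by lia),
    sum_insert (by simp), sum_insert (by simp), hF a]

lemma sum_Ico_periodic {N : ℤ} (hN : 0 < N) {F : ℤ → ℂ} (hF : Function.Periodic F N) (a b : ℤ) :
    ∑ j ∈ Ico a (a + N), F j = ∑ j ∈ Ico b (b + N), F j := by
  suffices h : ∀ c : ℤ, ∑ j ∈ Ico c (c + N), F j = ∑ j ∈ Ico 0 (0 + N), F j by rw [h a, h b]
  intro c
  induction c using Int.induction_on with
  | zero => rfl
  | succ n ih => rw [sum_Ico_periodic_add_one hN hF, ih]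
  | pred n ih => rw [← ih, ← sum_Ico_periodic_add_one hN hF (-(n : ℤ) - 1), sub_add_cancel]

lemma idxs_eq_Ico (M : ℕ) :
    idxs (2 * M) = Ico (-(M : ℤ) + 1) (-(M : ℤ) + 1 + 2 * M) := by
  ext j
  simp only [idxs, mem_Icc, mem_Ico]
  lia

lemma gridRoot_isPrimitiveRoot {M : ℕ} (hM : 0 < M) :
    IsPrimitiveRoot (gridRoot (2 * M)) (2 * M) := by
  convert Complex.isPrimitiveRoot_exp (2 * M) (by lia) using 1
  rw [gridRoot, hgrid]
  push_cast
  congr 1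
  ring

lemma exp_gridPt (N k j : ℤ) :
    Complex.exp (Complex.I * (k : ℂ) * (gridPt N j : ℂ)) = gridRoot N ^ (k * j) := by
  rw [gridRoot, ← Complex.exp_int_mul, gridPt]
  push_cast
  congr 1
  ring

lemma exp_neg_gridPt (N k j : ℤ) :
    Complex.exp (-(Complex.I * (k : ℂ) * (gridPt N j : ℂ))) = gridRoot N ^ (-(k * j)) := by
  rw [Complex.exp_neg, exp_gridPt, zpow_neg]

lemma conj_gridRoot_zpow (N n : ℤ) :
    (starRingEnd ℂ) (gridRoot N ^ n) = gridRoot N ^ (-n) := by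
  rw [gridRoot, ← Complex.exp_int_mul, ← Complex.exp_int_mul, ← Complex.exp_conj]
  simp

lemma gridRoot_ne_zero (N : ℤ) : gridRoot N ≠ 0 := Complex.exp_ne_zero _

lemma cot_gridPt (N i j : ℤ) :
    (Real.cot ((gridPt N i - gridPt N j) / 2) : ℂ) = cotKernel (gridRoot N ^ (i - j)) := by
  rw [Complex.ofReal_cot, Complex.cot_eq_exp_ratio, cotKernel, gridRoot, ← Complex.exp_int_mul]
  have h : 2 * Complex.I * (((gridPt N i - gridPt N j) / 2 : ℝ) : ℂ) =
      ((i - j : ℤ) : ℂ) * (Complex.I * (hgrid N : ℂ)) := by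
    simp only [gridPt]
    push_cast
    ring
  rw [h]

lemma zpow_periodic {z : ℂ} {N : ℤ} (hz : z ≠ 0) (hN : z ^ N = 1) (k : ℤ) :
    Function.Periodic (fun j : ℤ => z ^ (k * j)) N := by
  intro j
  simp only
  rw [mul_add, zpow_add₀ hz, mul_comm k N, zpow_mul z N, hN, one_zpow, mul_one]

lemma sum_idxs_gridRoot_zpow {M : ℕ} (hM : 0 < M) (n : ℤ) (hn : |n| < 2 * M) :
    ∑ j ∈ idxs (2 * M), gridRoot (2 * M) ^ (n * j) = if n = 0 then (2 * M : ℂ) else 0 := by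
  have hz := gridRoot_isPrimitiveRoot hM
  have hz0 := gridRoot_ne_zero (2 * M)
  set z := gridRoot (2 * M)
  have hzN : z ^ (2 * M : ℤ) = 1 := by exact_mod_cast hz.pow_eq_one
  rw [idxs_eq_Ico, sum_Ico_periodic (by lia) (zpow_periodic hz0 hzN n) _ 0, zero_add]
  have hrange : ∑ j ∈ Ico (0 : ℤ) (2 * M), z ^ (n * j) = ∑ p ∈ range (2 * M), (z ^ n) ^ p := by
    symm
    refine sum_nbij' (fun p => (p : ℤ)) Int.toNat ?_ ?_ ?_ ?_ ?_
    · intro p hp; simp at *; lia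
    · intro p hp; simp at *; lia
    · intro p hp; simp
    · intro p hp; simp at *; lia
    · intro p hp; rw [zpow_mul, zpow_natCast]
  rw [hrange]
  split_ifs with h
  · simp [h]
  · have h1 : z ^ n ≠ 1 := by
      intro h1
      have := (hz.zpow_eq_one_iff_dvd n).1 h1
      exact h (Int.eq_zero_of_abs_lt_dvd this (by push_cast; exact hn))
    rw [geom_sum_eq h1, ← zpow_natCast, ← zpow_mul, mul_comm, zpow_mul]
    push_cast
    simp [hzN]

lemma dft_idft {M : ℕ} (hM : 0 < M) (c : ℤ → ℂ) {k : ℤ} (hk : k ∈ idxs (2 * M)) :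
    dft (2 * M) (idft (2 * M) c) k = c k := by
  have hM' : (M : ℂ) ≠ 0 := by exact_mod_cast hM.ne'
  simp only [dft, idft, exp_gridPt, exp_neg_gridPt, sum_mul]
  rw [sum_comm]
  have hinner : ∀ l ∈ idxs (2 * M), ∑ j ∈ idxs (2 * M),
      c l * gridRoot (2 * M) ^ (l * j) * gridRoot (2 * M) ^ (-(k * j)) =
      if l = k then c l * (2 * M : ℂ) else 0 := by
    intro l hl
    have hlk : |l - k| < 2 * M := by
      simp only [idxs, mem_Icc] at hk hl
      rw [abs_lt]
      lia
    have := sum_idxs_gridRoot_zpow hM (l - k) hlk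
    simp only [mul_assoc, ← zpow_add₀ (gridRoot_ne_zero (2 * M)), ← mul_sum, ← sub_eq_add_neg,
      ← sub_mul, this, sub_eq_zero]
    split_ifs <;> simp
  rw [sum_congr rfl hinner, sum_ite_eq' _ _ _, if_pos hk]
  push_cast
  field_simp

lemma idft_congr {N : ℤ} {c d : ℤ → ℂ} (h : ∀ k ∈ idxs N, c k = d k) : idft N c = idft N d := by
  funext j
  exact sum_congr rfl fun k hk => by rw [h k hk]

lemma Sh_iterate_three {M : ℕ} (hM : 0 < M) (f : ℤ → ℂ) :
    (Sh (2 * M))^[3] f =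
      idft (2 * M) fun k => if k = M then 0 else (Complex.I * (k : ℂ)) ^ 3 * dft (2 * M) f k := by
  simp only [Function.iterate_succ, Function.iterate_zero, Function.comp, id]
  rw [Sh]
  refine idft_congr fun k hk => ?_
  rw [show (2 * (M : ℤ)) / 2 = M by lia, Sh, dft_idft hM _ hk, Sh, dft_idft hM _ hk,
    show (2 * (M : ℤ)) / 2 = M by lia]
  split_ifs <;> ring

lemma sum_odd_zpow_eq_zero {M : ℕ} {z : ℂ} (hz : IsPrimitiveRoot z (2 * M)) {k : ℤ}
    (hk : 0 < k) (hkM : k < M) : ∑ p ∈ range M, (z ^ (2 * p + 1)) ^ (-k) = 0 := by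
  have hz0 : z ≠ 0 := hz.ne_zero (by lia)
  have hterm : ∀ p : ℕ, (z ^ (2 * p + 1)) ^ (-k) = z ^ (-k) * (z ^ (-(2 * k))) ^ p := by
    intro p
    rw [← zpow_natCast, ← zpow_natCast, ← zpow_mul, ← zpow_mul, ← zpow_add₀ hz0]
    push_cast
    congr 1
    ring
  have h1 : z ^ (-(2 * k)) ≠ 1 := by
    intro h1
    have := Int.eq_zero_of_abs_lt_dvd ((hz.zpow_eq_one_iff_dvd _).1 h1)
      (by push_cast; rw [abs_lt]; lia)
    lia
  have h2 : (z ^ (-(2 * k))) ^ M = 1 := by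
    rw [← zpow_natCast, ← zpow_mul, hz.zpow_eq_one_iff_dvd]
    exact ⟨-k, by push_cast; ring⟩
  simp only [hterm, ← mul_sum]
  rw [geom_sum_eq h1, h2, sub_self, zero_div, mul_zero]

lemma cotKernel_inv {w : ℂ} (hw : w ≠ 0) : cotKernel w⁻¹ = -cotKernel w := by
  by_cases h : w = 1
  · simp [h, cotKernel]
  · have h1 : 1 - w ≠ 0 := sub_ne_zero.2 (Ne.symm h)
    have h3 : 1 - w⁻¹ = -((1 - w) / w) := by field_simp; ring
    rw [cotKernel, cotKernel, h3]
    field_simp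
    ring

lemma cotKernel_zpow_step {w : ℂ} (hw : w ≠ 0) (hw1 : w ≠ 1) (k : ℤ) :
    w ^ (-(k + 1)) * cotKernel w =
      w ^ (-k) * cotKernel w - Complex.I * (w ^ (-k) + w ^ (-(k + 1))) := by
  have h1 : 1 - w ≠ 0 := sub_ne_zero.2 (Ne.symm hw1)
  have h2 : w ^ (-k) = w ^ (-(k + 1)) * w := by
    rw [← zpow_add_one₀ hw]
    congr 1
    ring
  rw [h2, cotKernel]
  field_simp
  rw [Complex.I_sq]
  ring

lemma sum_odd_cotKernel_neg {M : ℕ} {z : ℂ} (hz : IsPrimitiveRoot z (2 * M)) (k : ℤ) :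
    ∑ p ∈ range M, (z ^ (2 * p + 1)) ^ (-(-k)) * cotKernel (z ^ (2 * p + 1)) =
      -∑ p ∈ range M, (z ^ (2 * p + 1)) ^ (-k) * cotKernel (z ^ (2 * p + 1)) := by
  rw [← sum_range_reflect, ← sum_neg_distrib]
  refine sum_congr rfl fun p hp => ?_
  have hp' := mem_range.1 hp
  have hz0 : z ≠ 0 := hz.ne_zero (by lia)
  have hinv : z ^ (2 * (M - 1 - p) + 1) = (z ^ (2 * p + 1))⁻¹ := by
    refine eq_inv_of_mul_eq_one_left ?_
    rw [← pow_add,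
      show 2 * (M - 1 - p) + 1 + (2 * p + 1) = 2 * M by lia, hz.pow_eq_one]
  rw [hinv, cotKernel_inv (pow_ne_zero _ hz0), inv_zpow', neg_neg]
  ring

lemma sum_odd_cotKernel_zero {M : ℕ} {z : ℂ} (hz : IsPrimitiveRoot z (2 * M)) :
    ∑ p ∈ range M, (z ^ (2 * p + 1)) ^ (-(0 : ℤ)) * cotKernel (z ^ (2 * p + 1)) = 0 := by
  have h0 := sum_odd_cotKernel_neg hz 0
  simp only [neg_zero] at h0 ⊢
  exact self_eq_neg.1 h0

lemma sum_odd_cotKernel_succ {M : ℕ} {z : ℂ} (hz : IsPrimitiveRoot z (2 * M)) (n : ℕ)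
    (hn : n + 1 < M) :
    ∑ p ∈ range M, (z ^ (2 * p + 1)) ^ (-((n : ℤ) + 1)) * cotKernel (z ^ (2 * p + 1)) =
      -(Complex.I * M) := by
  have hz0 : z ≠ 0 := hz.ne_zero (by lia)
  have hne : ∀ p : ℕ, z ^ (2 * p + 1) ≠ 1 := by
    intro p h
    have := (hz.pow_eq_one_iff_dvd _).1 h
    obtain ⟨q, hq⟩ := this
    rw [mul_assoc] at hq
    lia
  simp only [fun (p : ℕ) (k : ℤ) => cotKernel_zpow_step (pow_ne_zero (2 * p + 1) hz0) (hne p) k,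
    sum_sub_distrib, ← mul_sum, sum_add_distrib]
  rw [sum_odd_zpow_eq_zero hz (k := (n : ℤ) + 1) (by lia) (by lia)]
  induction n with
  | zero =>
    rw [Nat.cast_zero, sum_odd_cotKernel_zero hz]
    simp
  | succ n ih =>
    rw [sum_odd_zpow_eq_zero hz (k := ((n + 1 : ℕ) : ℤ)) (by lia) (by lia)]
    push_cast
    simp only [fun (p : ℕ) (k : ℤ) => cotKernel_zpow_step (pow_ne_zero (2 * p + 1) hz0) (hne p) k,
      sum_sub_distrib, ← mul_sum, sum_add_distrib]
    rw [sum_odd_zpow_eq_zero hz (k := (n : ℤ) + 1) (by lia) (by lia), ih (by lia)]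
    simp

lemma sum_odd_cotKernel {M : ℕ} {z : ℂ} (hz : IsPrimitiveRoot z (2 * M)) {k : ℤ}
    (hk : |k| < M) :
    ∑ p ∈ range M, (z ^ (2 * p + 1)) ^ (-k) * cotKernel (z ^ (2 * p + 1)) =
      -(Complex.I * M * (k.sign : ℂ)) := by
  rw [abs_lt] at hk
  rcases lt_trichotomy k 0 with h | h | h
  · have := sum_odd_cotKernel_succ hz (-k - 1).toNat (by lia)
    rw [show (((-k - 1).toNat : ℕ) : ℤ) + 1 = -k by lia, sum_odd_cotKernel_neg hz,
      neg_inj] at this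
    rw [this, Int.sign_eq_neg_one_of_neg h]
    simp
  · rw [h, sum_odd_cotKernel_zero hz]
    simp
  · have := sum_odd_cotKernel_succ hz (k - 1).toNat (by lia)
    rw [show (((k - 1).toNat : ℕ) : ℤ) + 1 = k by lia] at this
    rw [this, Int.sign_eq_one_of_pos h]
    simp

lemma sum_filter_odd_idxs {M : ℕ} (hM : 0 < M) {F : ℤ → ℂ} (hF : Function.Periodic F (2 * M))
    (i : ℤ) :
    ∑ j ∈ (idxs (2 * M)).filter (fun j => Odd (j - i)), F j =
      ∑ p ∈ range M, F (i - (2 * p + 1)) := by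
  have hper : Function.Periodic (fun j => if Odd (j - i) then F j else 0) (2 * M) := by
    intro j
    have : Odd (j + 2 * M - i) ↔ Odd (j - i) := by
      rw [Int.odd_iff, Int.odd_iff]
      lia
    simp only [this, hF j]
  rw [sum_filter, idxs_eq_Ico, sum_Ico_periodic (by lia) hper _ (i - 2 * M), sub_add_cancel,
    ← sum_filter]
  symm
  refine sum_nbij' (fun p => i - (2 * (p : ℤ) + 1)) (fun j => ((i - j) / 2).toNat) ?_ ?_ ?_ ?_ ?_
  · intro p hp; simp [Int.odd_iff] at *; lia
  · intro j hj; simp [Int.odd_iff] at *; lia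
  · intro p hp; simp at *; lia
  · intro j hj; simp [Int.odd_iff] at *; lia
  · intro p hp; rfl

lemma Hh_gridRoot_zpow {M : ℕ} (hM : 0 < M) {k : ℤ} (hk : |k| < M) (i : ℤ) :
    Hh (2 * M) (fun j => gridRoot (2 * M) ^ (k * j)) i =
      -(Complex.I * (k.sign : ℂ)) * gridRoot (2 * M) ^ (k * i) := by
  have hM' : (M : ℂ) ≠ 0 := by exact_mod_cast hM.ne'
  have hz := gridRoot_isPrimitiveRoot hM
  have hz0 := gridRoot_ne_zero (2 * M)
  have hh : ((hgrid (2 * M) / Real.pi : ℝ) : ℂ) = (M : ℂ)⁻¹ := by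
    have := Real.pi_ne_zero
    have hMr : (M : ℝ) ≠ 0 := by exact_mod_cast hM.ne'
    rw [hgrid, ← Complex.ofReal_natCast, ← Complex.ofReal_inv]
    push_cast
    field_simp
  rw [Hh, hh]
  simp only [cot_gridPt]
  set z := gridRoot (2 * M)
  have hzN : z ^ (2 * M : ℤ) = 1 := by exact_mod_cast hz.pow_eq_one
  have hper : Function.Periodic (fun j => z ^ (k * j) * cotKernel (z ^ (i - j))) (2 * M) := by
    intro j
    have h1 : z ^ (k * (j + 2 * M)) = z ^ (k * j) := zpow_periodic hz0 hzN k j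
    have h2 : z ^ (i - (j + 2 * M)) = z ^ (i - j) := by
      rw [← sub_sub, zpow_sub₀ hz0 (i - j), hzN, div_one]
    simp only [h1, h2]
  rw [sum_filter_odd_idxs hM hper]
  have hterm : ∀ p : ℕ, z ^ (k * (i - (2 * (p : ℤ) + 1))) *
      cotKernel (z ^ (i - (i - (2 * (p : ℤ) + 1)))) =
      z ^ (k * i) * ((z ^ (2 * p + 1)) ^ (-k) * cotKernel (z ^ (2 * p + 1))) := by
    intro p
    rw [sub_sub_cancel, ← mul_assoc, ← zpow_natCast z, ← zpow_mul, ← zpow_add₀ hz0]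
    push_cast
    congr 2
    ring
  simp only [hterm, ← mul_sum]
  rw [sum_odd_cotKernel hz hk]
  field_simp

lemma Hh_idft {M : ℕ} (hM : 0 < M) {c : ℤ → ℂ} (hc : c M = 0) :
    Hh (2 * M) (idft (2 * M) c) = idft (2 * M) fun k => -(Complex.I * (k.sign : ℂ)) * c k := by
  funext i
  have hlin : Hh (2 * M) (idft (2 * M) c) i =
      ∑ k ∈ idxs (2 * M), c k * Hh (2 * M) (fun j => gridRoot (2 * M) ^ (k * j)) i := by
    simp only [Hh, idft, exp_gridPt, sum_mul, mul_sum]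
    rw [sum_comm]
    refine sum_congr rfl fun k _ => sum_congr rfl fun j _ => ?_
    ring
  rw [hlin, idft]
  refine sum_congr rfl fun k hk => ?_
  by_cases h : k = M
  · simp [h, hc]
  · rw [Hh_gridRoot_zpow hM, exp_gridPt]
    · ring
    · simp only [idxs, mem_Icc] at hk
      rw [abs_lt]
      lia

lemma dip_idft {M : ℕ} (hM : 0 < M) (f c : ℤ → ℂ) :
    dip (2 * M) f (idft (2 * M) c) =
      ((2 * Real.pi : ℝ) : ℂ) *
        ∑ k ∈ idxs (2 * M), (starRingEnd ℂ) (dft (2 * M) f k) * c k := by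
  have hM' : (M : ℂ) ≠ 0 := by exact_mod_cast hM.ne'
  simp only [dip, dft, idft, hgrid, exp_gridPt, exp_neg_gridPt, map_mul, map_sum, map_inv₀,
    conj_gridRoot_zpow, neg_neg, mul_sum, sum_mul]
  rw [sum_comm]
  refine sum_congr rfl fun k _ => sum_congr rfl fun j _ => ?_
  push_cast
  simp only [map_mul, map_natCast, map_ofNat]
  field_simp

/-- equation (8.1) / parabolic smoothing: spectral formula for the
quadratic form `(φ, H_h S_h³ φ)_h` and its nonpositivity. -/
theorem parabolic_smoothing_quadratic_form (N : ℤ) (hN : 2 ≤ N) (hNe : Even N)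
    (φ : ℤ → ℂ) :
    dip N φ (Hh N ((Sh N)^[3] φ)) =
      -(((2 * Real.pi : ℝ) : ℂ) * ∑ k ∈ Finset.Icc (-(N / 2) + 1) (N / 2 - 1),
        (((|k| : ℝ) ^ 3 * ‖dft N φ k‖ ^ 2 : ℝ) : ℂ)) ∧
    ∀ μ : ℝ, 0 < μ →
      (dip N φ (fun i => ((μ : ℝ) : ℂ) * Hh N ((Sh N)^[3] φ) i)).re ≤ 0 := by
  obtain ⟨m, hm⟩ := hNe
  lift m to ℕ using by lia with M
  obtain rfl : N = 2 * M := by lia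
  have hM : 0 < M := by lia
  have hform : dip (2 * M) φ (Hh (2 * M) ((Sh (2 * M))^[3] φ)) =
      -(((2 * Real.pi : ℝ) : ℂ) *
        ∑ k ∈ Finset.Icc (-((2 * M : ℤ) / 2) + 1) ((2 * M : ℤ) / 2 - 1),
          (((|k| : ℝ) ^ 3 * ‖dft (2 * M) φ k‖ ^ 2 : ℝ) : ℂ)) := by
    rw [Sh_iterate_three hM, Hh_idft hM (by simp), dip_idft hM, ← mul_neg, ← sum_neg_distrib]
    congr 1
    symm
    refine sum_subset_zero_on_sdiff ?_ ?_ ?_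
    · intro k hk
      simp only [idxs, mem_Icc] at *
      lia
    · intro k hk
      simp only [idxs, mem_sdiff, mem_Icc] at hk
      rw [if_pos (by lia), mul_zero, mul_zero]
    · intro k hk
      simp only [mem_Icc] at hk
      rw [if_neg (by lia)]
      have hsign : ((|(k : ℝ)| : ℝ) : ℂ) = (k.sign : ℂ) * (k : ℂ) := by
        have h : (|k| : ℤ) = k.sign * k := (Int.sign_mul_self_eq_abs k).symm
        exact_mod_cast congrArg (Int.cast : ℤ → ℂ) h
      have hsq : ((|(k : ℝ)| : ℝ) : ℂ) ^ 2 = (k : ℂ) ^ 2 := by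
        exact_mod_cast congrArg (Complex.ofReal) (sq_abs (k : ℝ))
      have hconj := Complex.conj_mul' (dft (2 * M) φ k)
      rw [Complex.ofReal_mul, Complex.ofReal_pow, Complex.ofReal_pow, ← hconj, pow_succ, hsq,
        hsign]
      linear_combination (-(k.sign : ℂ) * (k : ℂ) ^ 3 *
        ((starRingEnd ℂ) (dft (2 * M) φ k) * dft (2 * M) φ k) * (1 - Complex.I ^ 2)) * Complex.I_sq
  refine ⟨hform, fun μ hμ => ?_⟩
  have hscale : dip (2 * M) φ (fun i => (μ : ℂ) * Hh (2 * M) ((Sh (2 * M))^[3] φ) i) =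
      (μ : ℂ) * dip (2 * M) φ (Hh (2 * M) ((Sh (2 * M))^[3] φ)) := by
    simp only [dip, mul_sum]
    refine sum_congr rfl fun j _ => ?_
    ring
  rw [hscale, hform, ← Complex.ofReal_sum, ← Complex.ofReal_mul, ← Complex.ofReal_neg,
    ← Complex.ofReal_mul, Complex.ofReal_re, mul_neg, neg_nonpos]
  have := Real.pi_pos
  positivity


end
end

section
/- There is a universal constant c > 0 such that for every even integer N ≥ 2 (with h = 2π/N) and every discrete function φ with φ̂_{N/2} = 0, extended N-periodically in its index, and for all integers i and j, |φ_j − φ_i| ≤ c h^{−1/2} |α_j − α_i| ‖S_h φ‖_{l²}, where α_j = jh for all j ∈ ℤ. -/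
open scoped BigOperators
open Finset

noncomputable section

/-- The characters `m ↦ e^{i m h}` of the grid. -/
def gridChar (N m : ℤ) : ℂ := Complex.exp (Complex.I * (m : ℂ) * (hgrid N : ℂ))

theorem gridChar_add (N m n : ℤ) : gridChar N (m + n) = gridChar N m * gridChar N n := by
  rw [gridChar, gridChar, gridChar, ← Complex.exp_add]
  congr 1
  push_cast
  ring

theorem gridChar_mul_natCast (N m : ℤ) (n : ℕ) : gridChar N (m * n) = gridChar N m ^ n := by
  rw [gridChar, gridChar, ← Complex.exp_nat_mul]
  congr 1
  push_cast
  ring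

theorem conj_gridChar (N m : ℤ) : (starRingEnd ℂ) (gridChar N m) = gridChar N (-m) := by
  rw [gridChar, gridChar, ← Complex.exp_conj]
  simp

theorem gridChar_eq_one_iff {N : ℤ} (hN : N ≠ 0) (m : ℤ) : gridChar N m = 1 ↔ N ∣ m := by
  have hN' : (N : ℂ) ≠ 0 := by exact_mod_cast hN
  have hπ : (2 * Real.pi * Complex.I : ℂ) ≠ 0 := Complex.two_pi_I_ne_zero
  rw [gridChar, Complex.exp_eq_one_iff]
  have key (n : ℤ) : Complex.I * (m : ℂ) * (hgrid N : ℂ) = n * (2 * Real.pi * Complex.I) ↔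
      m = N * n := by
    have h1 : Complex.I * (m : ℂ) * (hgrid N : ℂ) = (m / N : ℂ) * (2 * Real.pi * Complex.I) := by
      simp only [hgrid]
      push_cast
      ring
    rw [h1, mul_left_inj' hπ, div_eq_iff hN', mul_comm (n : ℂ)]
    exact_mod_cast Iff.rfl
  simp only [key]
  rfl

theorem exp_mul_gridPt (N k j : ℤ) :
    Complex.exp (Complex.I * (k : ℂ) * (gridPt N j : ℂ)) = gridChar N (k * j) := by
  rw [gridChar, gridPt]
  congr 1
  push_cast
  ring

theorem exp_neg_mul_gridPt (N k j : ℤ) :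
    Complex.exp (-(Complex.I * (k : ℂ) * (gridPt N j : ℂ))) = gridChar N (-(k * j)) := by
  rw [gridChar, gridPt]
  congr 1
  push_cast
  ring

theorem sum_idxs_eq_sum_range {N : ℤ} (hN : 2 ≤ N) (hNe : Even N) (f : ℤ → ℂ) :
    ∑ j ∈ idxs N, f j = ∑ n ∈ range N.toNat, f (-(N / 2) + 1 + n) := by
  obtain ⟨M, rfl⟩ := hNe
  symm
  refine Finset.sum_bij (fun n _ => -((M + M) / 2) + 1 + (n : ℤ)) ?_ ?_ ?_ ?_
  · intro n hn
    simp only [idxs, mem_range, mem_Icc] at *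
    omega
  · intro a _ b _ h
    simpa using h
  · intro j hj
    simp only [idxs, mem_range, mem_Icc] at *
    exact ⟨(j + (M + M) / 2 - 1).toNat, by omega, by omega⟩
  · intro _ _
    rfl

theorem card_idxs {N : ℤ} (hN : 2 ≤ N) (hNe : Even N) : ((idxs N).card : ℤ) = N := by
  obtain ⟨M, rfl⟩ := hNe
  rw [idxs, Int.card_Icc]
  omega

/-- Orthogonality of the grid characters. -/
theorem sum_gridChar_mul {N : ℤ} (hN : 2 ≤ N) (hNe : Even N) (m : ℤ) :
    ∑ j ∈ idxs N, gridChar N (m * j) = if N ∣ m then (N : ℂ) else 0 := by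
  have hN0 : N ≠ 0 := by omega
  split_ifs with h
  · have h1 (j : ℤ) : gridChar N (m * j) = 1 :=
      (gridChar_eq_one_iff hN0 _).2 (h.mul_right j)
    simp only [h1, sum_const, nsmul_eq_mul, mul_one]
    exact_mod_cast card_idxs hN hNe
  · have hne : gridChar N m - 1 ≠ 0 := sub_ne_zero.2 (mt (gridChar_eq_one_iff hN0 m).1 h)
    have hpow : gridChar N m ^ N.toNat = 1 := by
      rw [← gridChar_mul_natCast, gridChar_eq_one_iff hN0, Int.toNat_of_nonneg (by omega)]
      exact dvd_mul_left N m
    have hgeom : ∑ n ∈ range N.toNat, gridChar N m ^ n = 0 := by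
      have := geom_sum_mul (gridChar N m) N.toNat
      rw [hpow, sub_self] at this
      exact (mul_eq_zero.1 this).resolve_right hne
    rw [sum_idxs_eq_sum_range hN hNe]
    simp only [mul_add m _ (Nat.cast _), gridChar_add N _ (m * (Nat.cast _)),
      gridChar_mul_natCast]
    rw [← mul_sum, hgeom, mul_zero]

theorem eq_of_dvd_sub_of_mem_idxs {N : ℤ} (hNe : Even N) {k l : ℤ} (hk : k ∈ idxs N)
    (hl : l ∈ idxs N) (h : N ∣ k - l) : k = l := by
  obtain ⟨M, rfl⟩ := hNe
  simp only [idxs, mem_Icc] at hk hl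
  have := Int.eq_zero_of_abs_lt_dvd h (by rw [abs_lt]; omega)
  omega

theorem exists_mem_idxs_dvd_sub {N : ℤ} (hN : 2 ≤ N) (hNe : Even N) (j : ℤ) :
    ∃ l ∈ idxs N, N ∣ j - l := by
  obtain ⟨M, rfl⟩ := hNe
  have h0 := Int.emod_nonneg (j + M - 1) (b := M + M) (by omega)
  have h1 := Int.emod_lt_of_pos (j + M - 1) (b := M + M) (by omega)
  refine ⟨(j + M - 1) % (M + M) - M + 1, ?_, ?_⟩
  · simp only [idxs, mem_Icc]
    omega
  · have := Int.dvd_self_sub_emod (x := j + M - 1) (m := M + M)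
    convert this using 1
    ring

/-- Discrete Fourier inversion. -/
theorem idft_dft {N : ℤ} (hN : 2 ≤ N) (hNe : Even N) {φ : ℤ → ℂ}
    (hφ : Function.Periodic φ N) (j : ℤ) : idft N (dft N φ) j = φ j := by
  have hN' : (N : ℂ) ≠ 0 := by
    have : N ≠ 0 := by omega
    exact_mod_cast this
  obtain ⟨l, hl, t, ht⟩ := exists_mem_idxs_dvd_sub hN hNe j
  have hjl : φ j = φ l := by
    have := hφ.int_mul t l
    rw [← this]
    congr 1
    push_cast
    linarith
  simp only [idft, dft, exp_mul_gridPt, exp_neg_mul_gridPt]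
  simp only [mul_assoc, sum_mul]
  rw [← mul_sum, sum_comm]
  have h1 (y : ℤ) : ∑ x ∈ idxs N, φ y * (gridChar N (-(x * y)) * gridChar N (x * j)) =
      φ y * if N ∣ j - y then (N : ℂ) else 0 := by
    rw [← mul_sum, ← sum_gridChar_mul hN hNe]
    congr 1
    refine sum_congr rfl fun x _ => ?_
    rw [← gridChar_add]
    congr 1
    ring
  simp only [h1]
  rw [sum_eq_single_of_mem l hl, if_pos ⟨t, ht⟩, hjl]
  · field_simp
  · intro y hy hyl
    rw [if_neg, mul_zero]
    intro hd
    refine hyl (eq_of_dvd_sub_of_mem_idxs hNe hy hl ?_)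
    have := (Dvd.intro t ht.symm).sub hd
    simpa using this

/-- Discrete Parseval identity. -/
theorem sum_norm_idft_sq {N : ℤ} (hN : 2 ≤ N) (hNe : Even N) (c : ℤ → ℂ) :
    ∑ j ∈ idxs N, ‖idft N c j‖ ^ 2 = N * ∑ k ∈ idxs N, ‖c k‖ ^ 2 := by
  have h : ∑ j ∈ idxs N, idft N c j * (starRingEnd ℂ) (idft N c j) =
      N * ∑ k ∈ idxs N, c k * (starRingEnd ℂ) (c k) := by
    simp only [idft, exp_mul_gridPt, map_sum, map_mul, conj_gridChar, sum_mul_sum]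
    rw [sum_comm, mul_sum]
    refine sum_congr rfl fun k hk => ?_
    rw [sum_comm]
    have h1 (l : ℤ) : ∑ j ∈ idxs N, c k * gridChar N (k * j) *
        ((starRingEnd ℂ) (c l) * gridChar N (-(l * j))) =
        c k * (starRingEnd ℂ) (c l) * if N ∣ k - l then (N : ℂ) else 0 := by
      rw [← sum_gridChar_mul hN hNe, mul_sum]
      refine sum_congr rfl fun j _ => ?_
      rw [sub_mul, sub_eq_add_neg, gridChar_add]
      ring
    simp only [h1]
    rw [sum_eq_single_of_mem k hk, if_pos (by simp)]
    · ring
    · intro l hl hlk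
      rw [if_neg, mul_zero]
      exact fun hd => hlk (eq_of_dvd_sub_of_mem_idxs hNe hk hl hd).symm
  simp only [Complex.mul_conj'] at h
  exact_mod_cast h

theorem norm_exp_I_mul_sub_exp_I_mul_le (k x y : ℝ) :
    ‖Complex.exp (Complex.I * k * x) - Complex.exp (Complex.I * k * y)‖ ≤ |k| * |x - y| := by
  have h : Complex.exp (Complex.I * k * x) - Complex.exp (Complex.I * k * y) =
      Complex.exp (Complex.I * (k * y : ℝ)) *
        (Complex.exp (Complex.I * (k * (x - y) : ℝ)) - 1) := by
    rw [mul_sub, ← Complex.exp_add, mul_one]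
    push_cast
    ring_nf
  rw [h, norm_mul, mul_comm Complex.I, Complex.norm_exp_ofReal_mul_I, one_mul, ← abs_mul]
  exact Real.norm_exp_I_mul_ofReal_sub_one_le

theorem norm_idft_sub_idft_le (N : ℤ) (c : ℤ → ℂ) (i j : ℤ) :
    ‖idft N c j - idft N c i‖ ≤
      |gridPt N j - gridPt N i| * ∑ k ∈ idxs N, ‖Complex.I * (k : ℂ) * c k‖ := by
  rw [idft, idft, ← sum_sub_distrib, mul_sum]
  refine norm_sum_le_of_le _ fun k _ => ?_
  rw [← mul_sub, norm_mul]
  have := norm_exp_I_mul_sub_exp_I_mul_le k (gridPt N j) (gridPt N i)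
  calc ‖c k‖ * _ ≤ ‖c k‖ * (|(k : ℝ)| * |gridPt N j - gridPt N i|) := by
        gcongr
        simpa using this
    _ = _ := by
        rw [norm_mul, norm_mul, Complex.norm_I, Complex.norm_intCast]
        ring

theorem sum_norm_le_l2norm_idft {N : ℤ} (hN : 2 ≤ N) (hNe : Even N) (c : ℤ → ℂ) :
    ∑ k ∈ idxs N, ‖c k‖ ≤ hgrid N ^ (-(1 / 2) : ℝ) * l2norm N (idft N c) := by
  have hN' : (0 : ℝ) < N := by
    have : 0 < N := by omega
    exact_mod_cast this
  have hh : 0 < hgrid N := by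
    unfold hgrid
    positivity
  have hcard : ((idxs N).card : ℝ) = N := by exact_mod_cast card_idxs hN hNe
  rw [l2norm, sum_norm_idft_sq hN hNe, Real.rpow_neg hh.le, ← Real.sqrt_eq_rpow,
    Real.sqrt_mul hh.le, inv_mul_cancel_left₀ (Real.sqrt_pos.2 hh).ne', ← hcard]
  exact Real.le_sqrt_of_sq_le sq_sum_le_card_mul_sum_sq

/-- appendix estimate (A.3): a discrete Lipschitz bound for a
discrete function in terms of the `l²` norm of its pseudo-spectral derivative. -/
theorem discrete_lipschitz_bound :
    ∃ c : ℝ, 0 < c ∧ ∀ N : ℤ, 2 ≤ N → Even N → ∀ φ : ℤ → ℂ,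
      (∀ j : ℤ, φ (j + N) = φ j) → dft N φ (N / 2) = 0 →
      ∀ i j : ℤ,
        ‖φ j - φ i‖ ≤
          c * hgrid N ^ (-(1 / 2) : ℝ) * |gridPt N j - gridPt N i| *
            l2norm N (Sh N φ) := by
  refine ⟨1, one_pos, fun N hN hNe φ hper hhalf i j => ?_⟩
  have hφ : Function.Periodic φ N := hper
  have hSh : (fun k : ℤ => if k = N / 2 then 0 else Complex.I * (k : ℂ) * dft N φ k) =
      fun k : ℤ => Complex.I * (k : ℂ) * dft N φ k := by
    funext k
    split_ifs with h
    · rw [h, hhalf, mul_zero]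
    · rfl
  rw [← idft_dft hN hNe hφ j, ← idft_dft hN hNe hφ i, Sh, hSh]
  calc _ ≤ _ := norm_idft_sub_idft_le N (dft N φ) i j
    _ ≤ |gridPt N j - gridPt N i| * _ :=
        mul_le_mul_of_nonneg_left (sum_norm_le_l2norm_idft hN hNe _) (abs_nonneg _)
    _ = _ := by ring

end
end
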